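/- Let r, t > 1, 0 < λ < N, with 1/r + λ/N > 1 + 1/t, and set K := sup{‖|i|^{−λ} ∗ f‖_t : f ∈ ℓ^r(ℤ^N), ‖f‖_r = 1}. Let {f_n} ⊂ ℓ^r(ℤ^N) be a maximizing sequence, i.e. ‖f_n‖_r = 1 and ‖|i|^{−λ} ∗ f_n‖_t → K. Then liminf_{n→∞} ‖f_n‖_∞ > 0. -/

import Mathlib

/-!
The supercritical condition `1/r + λ/N > 1 + 1/t` is strict, so Young's inequality has room to spare:
the kernel `|i|^{-λ}` lies in `ℓ^s` for some `s` with `1/s` slightly below `λ/N`, and the convolution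
is still bounded into `ℓ^t` from `ℓ^q` for some `q` slightly above `r`. Interpolating
`‖f‖_q^q ≤ ‖f‖_∞^(q-r) ‖f‖_r^r` gives, when `‖f‖_r = 1`,
`‖|i|^{-λ} ∗ f‖_t^t ≤ C ‖f‖_∞^(q-r)` (`stmt13_bound`).

This shows that the supremum `K` is over a bounded set, and testing with a point mass shows `K > 0`
(`stmt13_exists_pos`). Along a maximizing sequence the left side is eventually at least `(K/2)^t`,
which bounds `‖f_n‖_∞` below by a positive constant.

The estimate rests on `stmt13_young`, proved with `ENNReal`-valued sums so that summability is not
an issue when exchanging the order of summation.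
-/


open Filter Topology

noncomputable section

/-- The vertex set of the `N`-dimensional integer lattice graph. -/
abbrev ZN (N : ℕ) := Fin N → ℤ

/-- Adjacency in the lattice graph `ℤ^N`: `x ∼ y` iff `Σ_k |x k - y k| = 1`. -/
def adj {N : ℕ} (x y : ZN N) : Prop := (∑ k, |x k - y k|) = 1

/-- `|∇u(x)|_p^p = Σ_{y∼x} |u(y)-u(x)|^p`. -/
def gradPow {N : ℕ} (p : ℝ) (u : ZN N → ℝ) (x : ZN N) : ℝ :=
  ∑' y : {y : ZN N // adj x y}, |u y.1 - u x| ^ p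

/-- `‖u‖_{D^{1,p}}^p = Σ_x |∇u(x)|_p^p`. -/
def DSumPow {N : ℕ} (p : ℝ) (u : ZN N → ℝ) : ℝ := ∑' x, gradPow p u x

/-- `‖u‖_{D^{1,p}}`. -/
def Dnorm {N : ℕ} (p : ℝ) (u : ZN N → ℝ) : ℝ := DSumPow p u ^ (1 / p)

/-- `‖u‖_q = (Σ_x |u(x)|^q)^{1/q}`. -/
def lpNorm {N : ℕ} (q : ℝ) (u : ZN N → ℝ) : ℝ := (∑' x, |u x| ^ q) ^ (1 / q)

/-- `u ∈ ℓ^q(ℤ^N)`. -/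
def Memlp {N : ℕ} (q : ℝ) (u : ZN N → ℝ) : Prop := Summable fun x => |u x| ^ q

/-- `u ∈ D^{1,p}(ℤ^N)`, identified with `{u ∈ ℓ^{p*} : ‖u‖_{D^{1,p}} < ∞}`. -/
def MemD {N : ℕ} (p pstar : ℝ) (u : ZN N → ℝ) : Prop :=
  Memlp pstar u ∧ Summable fun x => gradPow p u x

/-- Euclidean distance between lattice points, viewed in `ℝ^N`. -/
def eudist {N : ℕ} (i j : ZN N) : ℝ := Real.sqrt (∑ k, ((i k : ℝ) - (j k : ℝ)) ^ 2)

/-- `(|i|^{-λ} ∗ f)(i) = Σ_{j ≠ i} f(j)/|i-j|^λ`. -/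
def hlsConv {N : ℕ} (lam : ℝ) (f : ZN N → ℝ) (i : ZN N) : ℝ :=
  ∑' j : ZN N, if j = i then 0 else f j / eudist i j ^ lam

/-- The bilinear HLS sum `Σ_{i ≠ j} f(i) g(j) / |i-j|^λ`. -/
def hlsSum {N : ℕ} (lam : ℝ) (f g : ZN N → ℝ) : ℝ :=
  ∑' q : ZN N × ZN N, if q.1 = q.2 then 0 else f q.1 * g q.2 / eudist q.1 q.2 ^ lam

/-- `‖f‖_∞ = sup_x |f(x)|`. -/
def supNorm {N : ℕ} (f : ZN N → ℝ) : ℝ := ⨆ x, |f x|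

/-! ### A Young-type convolution inequality -/

/-- Hölder's inequality for unrestricted `ENNReal`-valued sums. -/
theorem stmt13_holder {ι : Type*} {p q : ℝ} (hpq : p.HolderConjugate q) (f g : ι → ENNReal) :
    ∑' i, f i * g i ≤ (∑' i, f i ^ p) ^ (1 / p) * (∑' i, g i ^ q) ^ (1 / q) := by
  let _ : MeasurableSpace ι := ⊤
  have : MeasurableSingletonClass ι := ⟨fun _ => trivial⟩
  have h := ENNReal.lintegral_mul_le_Lp_mul_Lq (MeasureTheory.Measure.count : MeasureTheory.Measure ι)
    hpq (f := f) (g := g) (measurable_from_top.aemeasurable) (measurable_from_top.aemeasurable)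
  simpa [MeasureTheory.lintegral_count] using h

/-- Substitute for the second Hölder step in Young's inequality: for `x, y ≤ 1` compare both factors
with powers of `max (x ^ s) (y ^ r)`, which is at most `1`, so the exponent condition may be slack. -/
theorem stmt13_mul_rpow_le_add {x y : ENNReal} (hx : x ≤ 1) (hy : y ≤ 1) {s r a b : ℝ}
    (hs : 0 < s) (hr : 0 < r) (ha : 0 ≤ a) (hb : 0 ≤ b) (hab : 1 ≤ a / s + b / r) :
    x ^ a * y ^ b ≤ x ^ s + y ^ r := by
  set m := max (x ^ s) (y ^ r) with hm
  have hm1 : m ≤ 1 := max_le (ENNReal.rpow_le_one hx hs.le) (ENNReal.rpow_le_one hy hr.le)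
  have h1 : x ^ a ≤ m ^ (a / s) := by
    calc x ^ a = (x ^ s) ^ (a / s) := by rw [← ENNReal.rpow_mul]; congr 1; field_simp
      _ ≤ _ := ENNReal.rpow_le_rpow (le_max_left _ _) (by positivity)
  have h2 : y ^ b ≤ m ^ (b / r) := by
    calc y ^ b = (y ^ r) ^ (b / r) := by rw [← ENNReal.rpow_mul]; congr 1; field_simp
      _ ≤ _ := ENNReal.rpow_le_rpow (le_max_right _ _) (by positivity)
  calc x ^ a * y ^ b ≤ m ^ (a / s) * m ^ (b / r) := mul_le_mul' h1 h2
    _ = m ^ (a / s + b / r) :=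
        (ENNReal.rpow_add_of_nonneg _ _ (by positivity) (by positivity)).symm
    _ ≤ m ^ (1 : ℝ) := ENNReal.rpow_le_rpow_of_exponent_ge hm1 hab
    _ = m := ENNReal.rpow_one _
    _ ≤ _ := max_le le_self_add le_add_self

/-- Young-type convolution inequality with a gain in the sup norm. Splitting
`κ F = (κ ^ (s/t) F ^ (q/t)) (κ ^ (1-s/t) F ^ (1-q/t))` and applying Hölder with exponents `t` and
`t/(t-1)`, the second factor is bounded uniformly and the first one sums to `‖κ‖_s^s ‖F‖_q^q`.
Since `q > r`, `‖F‖_q^q` is at most `‖F‖_∞^(q-r) ‖F‖_r^r`. -/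
theorem stmt13_young {G : Type*} [AddCommGroup G] (κ F : G → ENNReal) {M : ENNReal}
    {r s t q : ℝ} (ht : 1 < t) (hs : 0 < s) (hst : s < t) (hr : 0 < r) (hrq : r < q) (hqt : q < t)
    (hexp : t ≤ t / s + (t - q) / r)
    (hκ : ∀ z, κ z ≤ 1) (hF : ∀ z, F z ≤ M) (hM : M ≤ 1) (hFr : ∑' j, F j ^ r ≤ 1) :
    ∑' i, (∑' j, κ (i - j) * F j) ^ t
      ≤ (∑' z, κ z ^ s) * M ^ (q - r) * (∑' z, κ z ^ s + 1) ^ (t - 1) := by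
  set S := ∑' z, κ z ^ s with hS
  have ht0 : 0 < t := by linarith
  have ht1 : 0 < t - 1 := by linarith
  have hpq : t.HolderConjugate (t / (t - 1)) := Real.HolderConjugate.conjExponent ht
  have hshift : ∀ i, ∑' j, κ (i - j) ^ s = S := fun i =>
    (Equiv.subLeft i).tsum_eq (fun z => κ z ^ s)
  have hshift' : ∀ j, ∑' i, κ (i - j) ^ s = S := fun j =>
    (Equiv.subRight j).tsum_eq (fun z => κ z ^ s)
  have hinner : ∀ i, (∑' j, κ (i - j) * F j) ^ t
      ≤ (∑' j, κ (i - j) ^ s * F j ^ q) * (S + 1) ^ (t - 1) := by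
    intro i
    have h1 : ∀ j, κ (i - j) * F j = (κ (i - j) ^ (s / t) * F j ^ (q / t)) *
        (κ (i - j) ^ (1 - s / t) * F j ^ (1 - q / t)) := by
      intro j
      have e1 : κ (i - j) = κ (i - j) ^ (s / t) * κ (i - j) ^ (1 - s / t) := by
        rw [← ENNReal.rpow_add_of_nonneg _ _ (by positivity)
          (sub_nonneg.2 ((div_le_one ht0).2 hst.le))]; simp
      have e2 : F j = F j ^ (q / t) * F j ^ (1 - q / t) := by
        rw [← ENNReal.rpow_add_of_nonneg _ _ (div_nonneg (by linarith) ht0.le)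
          (sub_nonneg.2 ((div_le_one ht0).2 hqt.le))]; simp
      calc κ (i - j) * F j = (κ (i - j) ^ (s / t) * κ (i - j) ^ (1 - s / t)) *
            (F j ^ (q / t) * F j ^ (1 - q / t)) := by rw [← e1, ← e2]
        _ = _ := mul_mul_mul_comm _ _ _ _
    have h2 : ∑' j, (κ (i - j) ^ (1 - s / t) * F j ^ (1 - q / t)) ^ (t / (t - 1)) ≤ S + 1 := by
      calc _ ≤ ∑' j, (κ (i - j) ^ s + F j ^ r) := by
            refine ENNReal.tsum_le_tsum fun j => ?_
            rw [ENNReal.mul_rpow_of_nonneg _ _ (by positivity), ← ENNReal.rpow_mul,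
              ← ENNReal.rpow_mul]
            have ea : (1 - s / t) * (t / (t - 1)) = (t - s) / (t - 1) := by field_simp
            have eb : (1 - q / t) * (t / (t - 1)) = (t - q) / (t - 1) := by field_simp
            rw [ea, eb]
            refine stmt13_mul_rpow_le_add (hκ _) ((hF j).trans hM) hs hr
              (div_nonneg (by linarith) ht1.le) (div_nonneg (by linarith) ht1.le) ?_
            have : (t - s) / (t - 1) / s + (t - q) / (t - 1) / r
                = (t / s + (t - q) / r - 1) / (t - 1) := by field_simp; ring
            rw [this, le_div_iff₀ ht1]; linarith
        _ = S + ∑' j, F j ^ r := by rw [ENNReal.tsum_add, hshift]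
        _ ≤ S + 1 := by gcongr
    have h3 : ∀ j, (κ (i - j) ^ (s / t) * F j ^ (q / t)) ^ t = κ (i - j) ^ s * F j ^ q := by
      intro j
      rw [ENNReal.mul_rpow_of_nonneg _ _ ht0.le, ← ENNReal.rpow_mul, ← ENNReal.rpow_mul,
        div_mul_cancel₀ _ ht0.ne', div_mul_cancel₀ _ ht0.ne']
    calc (∑' j, κ (i - j) * F j) ^ t
        ≤ ((∑' j, κ (i - j) ^ s * F j ^ q) ^ (1 / t) *
            (S + 1) ^ (1 / (t / (t - 1)))) ^ t := by
          refine ENNReal.rpow_le_rpow ?_ ht0.le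
          simp_rw [h1]
          refine (stmt13_holder hpq _ _).trans ?_
          simp_rw [h3]
          gcongr
      _ = _ := by
          rw [ENNReal.mul_rpow_of_nonneg _ _ ht0.le, ← ENNReal.rpow_mul, ← ENNReal.rpow_mul]
          congr 2
          · rw [one_div_mul_cancel ht0.ne', ENNReal.rpow_one]
          · field_simp
  calc _ ≤ ∑' i, (∑' j, κ (i - j) ^ s * F j ^ q) * (S + 1) ^ (t - 1) :=
        ENNReal.tsum_le_tsum hinner
    _ = (∑' j, S * F j ^ q) * (S + 1) ^ (t - 1) := by
        rw [ENNReal.tsum_mul_right, ENNReal.tsum_comm]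
        simp_rw [ENNReal.tsum_mul_right, hshift']
    _ ≤ _ := by
        gcongr
        rw [ENNReal.tsum_mul_left]
        gcongr
        calc ∑' j, F j ^ q ≤ ∑' j, M ^ (q - r) * F j ^ r := by
              refine ENNReal.tsum_le_tsum fun j => ?_
              calc F j ^ q = F j ^ (q - r) * F j ^ r := by
                    rw [← ENNReal.rpow_add_of_nonneg _ _ (by linarith) hr.le]; simp
                _ ≤ _ := by
                    exact mul_le_mul_left (ENNReal.rpow_le_rpow (hF j) (by linarith)) _
          _ = M ^ (q - r) * ∑' j, F j ^ r := ENNReal.tsum_mul_left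
          _ ≤ M ^ (q - r) * 1 := by gcongr
          _ = _ := mul_one _

/-! ### The kernel on the lattice -/

/-- The kernel `|z|^{-λ}` on `ℤ^N`, set to `0` at the origin. -/
def stmt13_ker {N : ℕ} (lam : ℝ) (z : ZN N) : ℝ := if z = 0 then 0 else eudist z 0 ^ (-lam)

theorem stmt13_eudist_nonneg {N : ℕ} (z w : ZN N) : 0 ≤ eudist z w := Real.sqrt_nonneg _

theorem stmt13_one_le_eudist {N : ℕ} {z : ZN N} (hz : z ≠ 0) : 1 ≤ eudist z 0 := by
  obtain ⟨k, hk⟩ := Function.ne_iff.1 hz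
  rw [eudist, Real.one_le_sqrt]
  refine le_trans ?_ (Finset.single_le_sum (f := fun k => ((z k : ℝ) - ((0 : ZN N) k : ℝ)) ^ 2)
    (fun _ _ => sq_nonneg _) (Finset.mem_univ k))
  have hk' : z k ≠ 0 := hk
  have : (1 : ℤ) ≤ z k ^ 2 := Int.add_one_le_iff.2 (sq_pos_of_ne_zero hk')
  simp only [Pi.zero_apply, Int.cast_zero, sub_zero]
  exact_mod_cast this

theorem stmt13_ker_nonneg {N : ℕ} (lam : ℝ) (z : ZN N) : 0 ≤ stmt13_ker lam z := by
  unfold stmt13_ker; split_ifs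
  · exact le_rfl
  · exact Real.rpow_nonneg (stmt13_eudist_nonneg _ _) _

theorem stmt13_ker_le_one {N : ℕ} {lam : ℝ} (hlam : 0 ≤ lam) (z : ZN N) :
    stmt13_ker lam z ≤ 1 := by
  unfold stmt13_ker; split_ifs with h
  · exact zero_le_one
  · exact Real.rpow_le_one_of_one_le_of_nonpos (stmt13_one_le_eudist h) (by linarith)

theorem stmt13_hlsConv_eq {N : ℕ} (lam : ℝ) (f : ZN N → ℝ) (i : ZN N) :
    hlsConv lam f i = ∑' j, stmt13_ker lam (i - j) * f j := by
  refine tsum_congr fun j => ?_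
  by_cases h : j = i
  · simp [h, stmt13_ker]
  · have h' : i - j ≠ 0 := sub_ne_zero.2 (Ne.symm h)
    have he : eudist (i - j) 0 = eudist i j := by simp [eudist]
    rw [if_neg h, stmt13_ker, if_neg h', he, Real.rpow_neg (stmt13_eudist_nonneg _ _)]
    exact div_eq_inv_mul _ _

/-- Convergence of `∑ |z|^{-a}` over `ℤ^N` for `a > N`. The term at the origin is the real power
`0 ^ (-a)`, which is harmless. -/
theorem stmt13_summable {N : ℕ} {a : ℝ} (ha : (N : ℝ) < a) :
    Summable fun z : ZN N => eudist z 0 ^ (-a) := by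
  let b := (EuclideanSpace.basisFun (Fin N) ℝ).toBasis
  let L := Submodule.span ℤ (Set.range b)
  have hfr : Module.finrank ℤ L = N := by
    have := ZLattice.rank ℝ L
    simpa using this
  have hs := ZLattice.summable_norm_rpow L (-a) (by rw [hfr]; linarith)
  let e : ZN N → L := fun z => ∑ k, z k • ⟨b k, Submodule.subset_span ⟨k, rfl⟩⟩
  have he : ∀ z k, (e z : EuclideanSpace ℝ (Fin N)) k = z k := by
    intro z k
    simp [e, b, Finset.sum_apply, Pi.single_apply]
  have hinj : Function.Injective e := by
    intro z w h
    funext k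
    have := he z k
    rw [h, he w k] at this
    exact Int.cast_injective (α := ℝ) this.symm
  refine (hs.comp_injective hinj).congr fun z => ?_
  have : ‖e z‖ = eudist z 0 := by
    rw [← Submodule.norm_coe, EuclideanSpace.norm_eq, eudist]
    simp [he]
  simp [Function.comp, this]

theorem stmt13_ker_tsum {N : ℕ} {lam s : ℝ} (hs0 : 0 < s) (hs : (N : ℝ) < lam * s) :
    Summable fun z : ZN N => stmt13_ker lam z ^ s := by
  refine (stmt13_summable hs).of_nonneg_of_le
    (fun z => Real.rpow_nonneg (stmt13_ker_nonneg _ _) _) fun z => ?_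
  unfold stmt13_ker; split_ifs
  · rw [Real.zero_rpow hs0.ne']; exact Real.rpow_nonneg (stmt13_eudist_nonneg _ _) _
  · rw [← Real.rpow_mul (stmt13_eudist_nonneg _ _), neg_mul]

/-! ### Functions of unit `ℓ^r` norm -/

theorem stmt13_tsum_eq_one {N : ℕ} {r : ℝ} (hr : 0 < r) {f : ZN N → ℝ}
    (h1 : lpNorm r f = 1) : ∑' x, |f x| ^ r = 1 := by
  have h0 : 0 ≤ ∑' x, |f x| ^ r := tsum_nonneg fun _ => Real.rpow_nonneg (abs_nonneg _) _
  have := congrArg (· ^ r) h1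
  simpa [lpNorm, ← Real.rpow_mul h0, hr.ne'] using this

theorem stmt13_abs_le_one {N : ℕ} {r : ℝ} (hr : 0 < r) {f : ZN N → ℝ} (hf : Memlp r f)
    (h1 : lpNorm r f = 1) (x : ZN N) : |f x| ≤ 1 := by
  have h := hf.le_tsum x fun _ _ => Real.rpow_nonneg (abs_nonneg _) _
  rw [stmt13_tsum_eq_one hr h1] at h
  by_contra! hc
  exact absurd h (not_le.2 (Real.one_lt_rpow hc hr))

theorem stmt13_abs_le_supNorm {N : ℕ} {r : ℝ} (hr : 0 < r) {f : ZN N → ℝ} (hf : Memlp r f)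
    (h1 : lpNorm r f = 1) (x : ZN N) : |f x| ≤ supNorm f :=
  le_ciSup (f := fun x => |f x|) ⟨1, by rintro _ ⟨y, rfl⟩; exact stmt13_abs_le_one hr hf h1 y⟩ x

theorem stmt13_supNorm_le_one {N : ℕ} {r : ℝ} (hr : 0 < r) {f : ZN N → ℝ} (hf : Memlp r f)
    (h1 : lpNorm r f = 1) : supNorm f ≤ 1 :=
  ciSup_le fun x => stmt13_abs_le_one hr hf h1 x

theorem stmt13_supNorm_nonneg {N : ℕ} (f : ZN N → ℝ) : 0 ≤ supNorm f :=
  Real.iSup_nonneg fun _ => abs_nonneg _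

/-! ### Bound and positivity of the supremum -/

/-- The convolution estimate for functions of unit `ℓ^r` norm: a power of the sup norm controls the
`ℓ^t` norm of `|i|^{-λ} ∗ f`. -/
theorem stmt13_bound {N : ℕ} {r s t q lam : ℝ} (ht : 1 < t) (hs : 0 < s) (hst : s < t)
    (hr : 0 < r) (hrq : r < q) (hqt : q < t) (hexp : t ≤ t / s + (t - q) / r)
    (hlam : 0 < lam) (hsN : (N : ℝ) < lam * s) :
    ∃ C : ℝ, 0 < C ∧ ∀ f : ZN N → ℝ, Memlp r f → lpNorm r f = 1 →
      lpNorm t (hlsConv lam f) ≤ (C * supNorm f ^ (q - r)) ^ (1 / t) := by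
  set κ : ZN N → ENNReal := fun z => ENNReal.ofReal (stmt13_ker lam z) with hκ
  set S := ∑' z, κ z ^ s with hS
  have hSfin : S ≠ ⊤ := by
    have h : ∀ z, κ z ^ s = ENNReal.ofReal (stmt13_ker lam z ^ s) := fun z =>
      ENNReal.ofReal_rpow_of_nonneg (stmt13_ker_nonneg _ _) hs.le
    rw [hS, tsum_congr h]
    exact (stmt13_ker_tsum hs hsN).tsum_ofReal_ne_top
  set D := S * (S + 1) ^ (t - 1) with hD
  have hDfin : D ≠ ⊤ := ENNReal.mul_ne_top hSfin
    (ENNReal.rpow_ne_top_of_nonneg (by linarith) (ENNReal.add_ne_top.2 ⟨hSfin, by simp⟩))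
  refine ⟨D.toReal + 1, by positivity, fun f hf h1 => ?_⟩
  have hsn := stmt13_supNorm_nonneg f
  have hy := stmt13_young κ (fun j => ENNReal.ofReal |f j|) (M := ENNReal.ofReal (supNorm f))
    ht hs hst hr hrq hqt hexp
    (fun z => ENNReal.ofReal_le_one.2 (stmt13_ker_le_one hlam.le z))
    (fun z => ENNReal.ofReal_le_ofReal (stmt13_abs_le_supNorm hr hf h1 z))
    (ENNReal.ofReal_le_one.2 (stmt13_supNorm_le_one hr hf h1))
    (by
      simp_rw [fun j => ENNReal.ofReal_rpow_of_nonneg (abs_nonneg (f j)) hr.le]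
      rw [← ENNReal.ofReal_tsum_of_nonneg (fun _ => Real.rpow_nonneg (abs_nonneg _) _) hf,
        stmt13_tsum_eq_one hr h1, ENNReal.ofReal_one])
  have hpt : ∀ i, ENNReal.ofReal (|hlsConv lam f i| ^ t)
      ≤ (∑' j, κ (i - j) * ENNReal.ofReal |f j|) ^ t := by
    intro i
    rw [← ENNReal.ofReal_rpow_of_nonneg (abs_nonneg _) (by linarith)]
    refine ENNReal.rpow_le_rpow ?_ (by linarith)
    rw [stmt13_hlsConv_eq, ← Real.enorm_eq_ofReal_abs]
    refine enorm_tsum_le_tsum_enorm.trans (le_of_eq (tsum_congr fun j => ?_))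
    rw [enorm_mul, Real.enorm_eq_ofReal (stmt13_ker_nonneg _ _), Real.enorm_eq_ofReal_abs]
  have hfin : ∑' i, ENNReal.ofReal (|hlsConv lam f i| ^ t)
      ≤ ENNReal.ofReal ((D.toReal + 1) * supNorm f ^ (q - r)) := by
    calc _ ≤ _ := (ENNReal.tsum_le_tsum hpt).trans hy
      _ = D * ENNReal.ofReal (supNorm f) ^ (q - r) := by rw [hD]; ring
      _ ≤ ENNReal.ofReal (D.toReal + 1) * ENNReal.ofReal (supNorm f) ^ (q - r) := by
          gcongr
          calc D = ENNReal.ofReal D.toReal := (ENNReal.ofReal_toReal hDfin).symm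
            _ ≤ _ := ENNReal.ofReal_le_ofReal (by linarith)
      _ = _ := by
          rw [ENNReal.ofReal_rpow_of_nonneg hsn (by linarith),
            ENNReal.ofReal_mul (by positivity)]
  refine Real.rpow_le_rpow (tsum_nonneg fun _ => Real.rpow_nonneg (abs_nonneg _) _) ?_
    (by positivity)
  have := ENNReal.toReal_le_of_le_ofReal (by positivity) hfin
  rw [ENNReal.tsum_toReal_eq (fun _ => ENNReal.ofReal_ne_top)] at this
  simpa [ENNReal.toReal_ofReal (Real.rpow_nonneg (abs_nonneg _) _)] using this

/-- The point mass at the origin is an admissible competitor, and its convolution is the kernel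
itself. -/
theorem stmt13_exists_pos {N : ℕ} {r t lam : ℝ} (hr : 0 < r) (ht : 0 < t) (hN : 0 < N)
    (htN : (N : ℝ) < lam * t) :
    ∃ f : ZN N → ℝ, Memlp r f ∧ lpNorm r f = 1 ∧ 0 < lpNorm t (hlsConv lam f) := by
  have hδ : (fun x : ZN N => |(Pi.single 0 1 : ZN N → ℝ) x| ^ r) = Pi.single 0 1 := by
    funext x
    by_cases h : x = 0 <;> simp [h, hr.ne']
  refine ⟨Pi.single 0 1, ?_, ?_, ?_⟩
  · rw [Memlp, hδ]; exact (hasSum_pi_single 0 1).summable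
  · rw [lpNorm, hδ, (hasSum_pi_single 0 1).tsum_eq, Real.one_rpow]
  · have hc : hlsConv lam (Pi.single 0 1 : ZN N → ℝ) = stmt13_ker lam := by
      funext i
      rw [stmt13_hlsConv_eq, tsum_eq_single 0 fun j hj => by simp [hj]]
      simp
    have hz : (fun _ => 1 : ZN N) ≠ 0 := fun h => by simpa using congrFun h ⟨0, hN⟩
    rw [hc, lpNorm]
    simp_rw [abs_of_nonneg (stmt13_ker_nonneg lam _)]
    refine Real.rpow_pos_of_pos ((stmt13_ker_tsum ht htN).tsum_pos
      (fun z => Real.rpow_nonneg (stmt13_ker_nonneg _ _) _) (fun _ => 1)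
      (Real.rpow_pos_of_pos ?_ _)) _
    rw [stmt13_ker, if_neg hz]
    exact Real.rpow_pos_of_pos (zero_lt_one.trans_le (stmt13_one_le_eudist hz)) _

/-! ### Maximizing sequences -/

/-- a maximizing sequence for the supercritical discrete HLS
constant has `liminf ‖f_n‖_∞ > 0`. -/
theorem stmt13 (N : ℕ) (r t lam : ℝ) (hr : 1 < r) (ht : 1 < t)
    (hlam0 : 0 < lam) (hlamN : lam < (N : ℝ))
    (hsup : 1 / r + lam / (N : ℝ) > 1 + 1 / t)
    (K : ℝ)
    (hK : K = sSup {c : ℝ | ∃ f : ZN N → ℝ, Memlp r f ∧ lpNorm r f = 1 ∧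
        c = lpNorm t (hlsConv lam f)})
    (f : ℕ → ZN N → ℝ)
    (hmem : ∀ n, Memlp r (f n)) (hnorm : ∀ n, lpNorm r (f n) = 1)
    (hmax : Tendsto (fun n => lpNorm t (hlsConv lam (f n))) atTop (𝓝 K)) :
    0 < Filter.liminf (fun n => supNorm (f n)) atTop := by
  have hr0 : 0 < r := by linarith
  have ht0 : 0 < t := by linarith
  have hN0 : (0 : ℝ) < N := hlam0.trans hlamN
  have hr1 : 1 / r < 1 := by rw [div_lt_one hr0]; exact hr
  have hl1 : lam / N < 1 := by rw [div_lt_one hN0]; exact hlamN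
  -- `2 d` is the slack in the supercritical condition, shared equally between `s` and `q`.
  obtain ⟨d, hd0, hd⟩ : ∃ d : ℝ, 0 < d ∧ 1 / r + lam / N = 1 + 1 / t + 2 * d :=
    ⟨(1 / r + lam / N - 1 - 1 / t) / 2, by linarith, by ring⟩
  have hσ : 1 / t < lam / N - d := by linarith
  have ht' : 0 < 1 / t := by positivity
  have hσ0 : 0 < lam / N - d := by linarith
  set s := 1 / (lam / N - d) with hs
  set q := r * (1 + t * d) with hq
  have hs0 : 0 < s := by positivity
  have hst : s < t := by
    rw [hs, div_lt_comm₀ hσ0 ht0]; exact hσ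
  have hrq : r < q := by
    have : 0 < r * (t * d) := by positivity
    rw [hq]; linarith
  have hqt : q < t := by
    have h : (1 / t + d) * (r * t) < 1 / r * (r * t) := by
      apply mul_lt_mul_of_pos_right _ (by positivity)
      linarith
    have e1 : (1 / t + d) * (r * t) = q := by rw [hq]; field_simp
    have e2 : 1 / r * (r * t) = t := by field_simp
    linarith
  have hexp : t ≤ t / s + (t - q) / r := by
    have e1 : t / s = t * (lam / N - d) := by rw [hs]; field_simp
    have e2 : (t - q) / r = t * (1 / r) - 1 - t * d := by rw [hq]; field_simp; ring
    have e3 : t * (1 / t) = 1 := by field_simp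
    have e4 := congrArg (t * ·) hd
    simp only [mul_add] at e4
    rw [e1, e2, mul_sub]
    linarith
  have hsN : (N : ℝ) < lam * s := by
    rw [hs, mul_one_div, lt_div_iff₀ hσ0, mul_sub, mul_div_cancel₀ _ hN0.ne']
    have : 0 < N * d := by positivity
    linarith
  obtain ⟨C, hC, hbound⟩ := stmt13_bound ht hs0 hst hr0 hrq hqt hexp hlam0 hsN
  have hKpos : 0 < K := by
    obtain ⟨g, hg, hg1, hgpos⟩ := stmt13_exists_pos hr0 ht0 (by exact_mod_cast hN0)
      (hsN.trans (mul_lt_mul_of_pos_left hst hlam0))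
    rw [hK]
    refine hgpos.trans_le (le_csSup ⟨C ^ (1 / t), ?_⟩ ⟨g, hg, hg1, rfl⟩)
    rintro _ ⟨h, hh, hh1, rfl⟩
    refine (hbound h hh hh1).trans ?_
    have h0 := stmt13_supNorm_nonneg h
    refine Real.rpow_le_rpow (by positivity) ?_ (by positivity)
    exact mul_le_of_le_one_right hC.le
      (Real.rpow_le_one h0 (stmt13_supNorm_le_one hr0 hh hh1) (by linarith))
  set c := ((K / 2) ^ t / C) ^ (1 / (q - r)) with hc
  have hc0 : 0 < c := by positivity
  refine hc0.trans_le (le_liminf_of_le ?_ ?_)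
  -- `supNorm (f n) ≤ 1` ensures that the real `liminf` is not a junk value.
  · exact (isBoundedUnder_of ⟨1, fun n =>
      stmt13_supNorm_le_one hr0 (hmem n) (hnorm n)⟩).isCoboundedUnder_ge
  · filter_upwards [hmax.eventually (lt_mem_nhds (half_lt_self hKpos))] with n hn
    have h0 := stmt13_supNorm_nonneg (f n)
    have hqr : 0 < q - r := by linarith
    have h1 := hn.le.trans (hbound _ (hmem n) (hnorm n))
    have h2 : (K / 2) ^ t ≤ C * supNorm (f n) ^ (q - r) := by
      have := Real.rpow_le_rpow (by positivity) h1 ht0.le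
      rwa [← Real.rpow_mul (by positivity), one_div_mul_cancel ht0.ne', Real.rpow_one] at this
    have h3 : (K / 2) ^ t / C ≤ supNorm (f n) ^ (q - r) := by
      rwa [div_le_iff₀' hC]
    calc c ≤ (supNorm (f n) ^ (q - r)) ^ (1 / (q - r)) :=
          Real.rpow_le_rpow (by positivity) h3 (by positivity)
      _ = supNorm (f n) := by
          rw [← Real.rpow_mul h0, mul_one_div_cancel hqr.ne', Real.rpow_one]
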